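/- In the hypersurface setting of the context, for every field extension K of k and every arc φ : S[x] → K[[t]] in X = V(f) through the closed point ξ (with φ(x) and all φ(z_j) nonzero), one has r_{X,φ}/ord(φ) ≥ ord(G_X^{(d)}). -/

import Mathlib

open Polynomial
open scoped ENNReal

noncomputable section

namespace NashMult

/-- The `m`-adic order `ν(f)` of an element `f` of a ring: the largest `n` with `f ∈ m ^ n`. -/
def adicOrder {R : Type*} [CommRing R] (m : Ideal R) (f : R) : ℕ :=
  sSup {n : ℕ | f ∈ m ^ n}

/-- A subalgebra `G ⊆ R[W]` is *graded* if it is spanned by its "monomials", i.e. it is closed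
under taking homogeneous components.  This is the condition expressing that `G = ⊕ I_l W^l`
for a family of ideals `I_l` (with `I_0 = R` and `I_i · I_j ⊆ I_{i+j}` automatic). -/
def Graded {R : Type*} [CommRing R] (G : Subalgebra R (Polynomial R)) : Prop :=
  ∀ p ∈ G, ∀ n : ℕ, (C (p.coeff n) * X ^ n : Polynomial R) ∈ G

/-- A *Rees algebra* over `R`: a finitely generated graded subalgebra of `R[W]`. -/
def IsReesAlgebra {R : Type*} [CommRing R] (G : Subalgebra R (Polynomial R)) : Prop :=
  G.FG ∧ Graded G

/-- The order of (the Rees algebra) `G` at the closed point of the local ring `(R, m)`: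
`ord(G) = inf { ν(f)/n : f W^n a homogeneous element of G, n ≥ 1, f ≠ 0 }`
(with value `∞` for the empty infimum). -/
def reesOrder {R : Type*} [CommRing R] (m : Ideal R) (G : Subalgebra R (Polynomial R)) : ℝ≥0∞ :=
  sInf {q : ℝ≥0∞ | ∃ (f : R) (n : ℕ), f ≠ 0 ∧ 1 ≤ n ∧ (C f * X ^ n : Polynomial R) ∈ G ∧
    q = (adicOrder m f : ℝ≥0∞) / (n : ℝ≥0∞)}

/-- `G = ⊕ I_l W^l` is *differentially closed* relative to a family `D` of derivations if
`I_{l+1} ⊆ I_l` and `D_j (I_l) ⊆ I_{l-1}` for all `l ≥ 1` and all `j`. -/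
def DiffClosed {k R ι : Type*} [CommRing k] [CommRing R] [Algebra k R]
    (D : ι → Derivation k R R) (G : Subalgebra R (Polynomial R)) : Prop :=
  (∀ (f : R) (l : ℕ), 1 ≤ l → (C f * X ^ (l + 1) : Polynomial R) ∈ G →
      (C f * X ^ l : Polynomial R) ∈ G) ∧
  (∀ (f : R) (l : ℕ) (j : ι), (C f * X ^ (l + 1) : Polynomial R) ∈ G →
      (C (D j f) * X ^ l : Polynomial R) ∈ G)

/-- `Diff(M)`: the smallest graded differentially closed subalgebra of `R[W]` containing the
set `M`. -/
def diffClosure {k R ι : Type*} [CommRing k] [CommRing R] [Algebra k R]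
    (D : ι → Derivation k R R) (M : Set (Polynomial R)) : Subalgebra R (Polynomial R) :=
  sInf {G : Subalgebra R (Polynomial R) | M ⊆ ↑G ∧ Graded G ∧ DiffClosed D G}

/-- The image `ψ(G)` of a Rees algebra `G` over `R` under a homomorphism (arc) `ψ : R → K⟦t⟧`:
the Rees algebra over `K⟦t⟧` generated by all `ψ(g) W^l` for `g W^l` a homogeneous element of
`G` with `ψ(g) ≠ 0`. -/
def arcImage {R A : Type*} [CommRing R] [CommRing A] (ψ : R → A)
    (G : Subalgebra R (Polynomial R)) : Subalgebra A (Polynomial A) :=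
  Algebra.adjoin A {p : Polynomial A | ∃ (g : R) (l : ℕ),
    (C g * X ^ l : Polynomial R) ∈ G ∧ ψ g ≠ 0 ∧ p = C (ψ g) * X ^ l}

/-- The order `ord(ψ)` of an arc `ψ : R → K⟦t⟧`: the largest `n` such that
`ψ(m) ⊆ t^n` (`t` being the ideal `tI`). -/
def homOrd {R A : Type*} [CommRing R] [CommRing A] (m : Ideal R) (tI : Ideal A)
    (ψ : R → A) : ℕ :=
  sSup {n : ℕ | ∀ s ∈ m, ψ s ∈ tI ^ n}

/-- The maximal ideal `(t)` of `K⟦t⟧`. -/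
def tId (K : Type*) [CommRing K] : Ideal (PowerSeries K) :=
  Ideal.span {(PowerSeries.X : PowerSeries K)}

/-- The `t`-adic order on `K⟦t⟧`. -/
def tOrd {K : Type*} [CommRing K] (g : PowerSeries K) : ℕ :=
  adicOrder (tId K) g

/-- The family of ideals `I_l` of the graded algebra `G = ⊕ I_l W^l`. -/
def idealFam {R : Type*} [CommRing R] (G : Subalgebra R (Polynomial R)) (l : ℕ) : Ideal R :=
  Submodule.comap (Polynomial.monomial l : R →ₗ[R] Polynomial R) (Subalgebra.toSubmodule G)

/-- The closed point of the local ring `(R, m)` belongs to the singular locus of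
`G = ⊕ I_l W^l`, i.e. `ν(I_l) ≥ l` for all `l ≥ 1`. -/
def SingFam {R : Type*} [CommRing R] (m : Ideal R) (I : ℕ → Ideal R) : Prop :=
  ∀ l : ℕ, 1 ≤ l → I l ≤ m ^ l

/-- The transform `⊕ (I_l · T^{-l}) W^l` of a Rees algebra `⊕ I_l W^l` over a DVR with
uniformizer `T` (when the closed point lies in the singular locus, `I_l ⊆ (T^l)` and
`I_l · T^{-l} = (I_l : (T^l))`). -/
def transformFam {R : Type*} [CommRing R] (T : R) (I : ℕ → Ideal R) : ℕ → Ideal R :=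
  fun l => (I l).colon (Ideal.span {T ^ l})

/-- The persistance: the least number `κ` of transforms needed so that the closed point no
longer lies in the singular locus. -/
def persist {R : Type*} [CommRing R] (m : Ideal R) (T : R)
    (G : Subalgebra R (Polynomial R)) : ℕ :=
  sInf {κ : ℕ | ¬ SingFam m ((transformFam T)^[κ] (idealFam G))}

/-- The set of elements of a ring integral over a subset `s` (monic equation with
coefficients in `s`). -/
def intClos {A : Type*} [CommRing A] (s : Set A) : Set A :=
  {p : A | ∃ q : Polynomial A, q.Monic ∧ (∀ n, q.coeff n ∈ s) ∧ Polynomial.eval p q = 0}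


/-- The monic polynomial `f = x^b + B_{b-2} x^{b-2} + ⋯ + B_1 x + B_0` with coefficients
`B_j = Bc j` (only `j ≤ b - 2` is relevant). -/
def minPolyOf {S : Type*} [CommRing S] (b : ℕ) (Bc : ℕ → S) : Polynomial S :=
  Polynomial.X ^ b + ∑ j ∈ Finset.range (b - 1), Polynomial.C (Bc j) * Polynomial.X ^ j


/-- The maximal ideal `(z_1, …, z_d)` of the polynomial ring `k[z_1, …, z_d]`
(the kernel of evaluation at the origin). -/
def mPoly (k : Type) [Field k] (d : ℕ) : Ideal (MvPolynomial (Fin d) k) :=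
  RingHom.ker (MvPolynomial.aeval (fun _ => (0 : k)) : MvPolynomial (Fin d) k →ₐ[k] k)

instance {k : Type} [Field k] {d : ℕ} : (mPoly k d).IsMaximal :=
  RingHom.ker_isMaximal_of_surjective _ (fun a => ⟨MvPolynomial.C a, by simp⟩)

instance {k : Type} [Field k] {d : ℕ} : (mPoly k d).IsPrime :=
  (inferInstance : (mPoly k d).IsMaximal).isPrime

/-- `IsSLoc k d S` says that `S` is (identified with) the localization of `k[z_1, …, z_d]`
at the maximal ideal `(z_1, …, z_d)`. -/
abbrev IsSLoc (k : Type) [Field k] (d : ℕ) (S : Type) [CommRing S]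
    [Algebra (MvPolynomial (Fin d) k) S] : Prop :=
  IsLocalization.AtPrime S (mPoly k d)

/-- The element `z_j` of `S`. -/
def zvar (k : Type) [Field k] (d : ℕ) (S : Type) [CommRing S]
    [Algebra (MvPolynomial (Fin d) k) S] (j : Fin d) : S :=
  algebraMap (MvPolynomial (Fin d) k) S (MvPolynomial.X j)

/-- The maximal ideal `m = (z_1, …, z_d)` of the local ring `S`. -/
def mS (k : Type) [Field k] (d : ℕ) (S : Type) [CommRing S]
    [Algebra (MvPolynomial (Fin d) k) S] : Ideal S :=
  (mPoly k d).map (algebraMap (MvPolynomial (Fin d) k) S)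


variable (k : Type) [Field k] (d : ℕ)
variable (S : Type) [CommRing S] [Algebra (MvPolynomial (Fin d) k) S] [Algebra k S]

/-- The elimination algebra `G_X^{(d)} = Diff(S[B_{b-2} W^2, …, B_0 W^b])` over `S` of the
hypersurface `X = V(f)`, where `f = x^b + B_{b-2} x^{b-2} + ⋯ + B_0`. -/
def hypElim (D : Fin d → Derivation k S S) (b : ℕ) (Bc : ℕ → S) :
    Subalgebra S (Polynomial S) :=
  diffClosure D {p : Polynomial S | ∃ i ≤ b - 2,
    p = Polynomial.C (Bc i) * Polynomial.X ^ (b - i)}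

/-- An arc in the hypersurface `X = V(f)` through the closed point `ξ`: a `k`-algebra
homomorphism `φ : S[x] → K⟦t⟧` with `φ(f) = 0` and `φ(x), φ(z_1), …, φ(z_d) ∈ (t)`,
with `φ(x)` and all `φ(z_j)` nonzero. -/
def IsHypArc (b : ℕ) (Bc : ℕ → S) {K : Type} [Field K] [Algebra k K]
    (φ : Polynomial S →ₐ[k] PowerSeries K) : Prop :=
  φ (minPolyOf b Bc) = 0 ∧
  φ Polynomial.X ∈ tId K ∧ (∀ j, φ (Polynomial.C (zvar k d S j)) ∈ tId K) ∧
  φ Polynomial.X ≠ 0 ∧ (∀ j, φ (Polynomial.C (zvar k d S j)) ≠ 0)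

/-- The order of the arc `φ`: `ord(φ) = min {α_0, α_1, …, α_d}`, where
`α_0 = ord_t φ(x)` and `α_j = ord_t φ(z_j)`. -/
def hypArcOrd {K : Type} [Field K] [Algebra k K]
    (φ : Polynomial S →ₐ[k] PowerSeries K) : ℕ :=
  sInf (insert (tOrd (φ Polynomial.X))
    (Set.range fun j => tOrd (φ (Polynomial.C (zvar k d S j)))))

/-- The contact algebra `G^{(1)}_{X_0,φ}`: the Rees algebra over `K⟦t⟧` generated by
`t^{α_0} W` together with all `φ(g) W^l`, for `g W^l` a homogeneous element of `G_X^{(d)}`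
with `φ(g) ≠ 0`. -/
def hypContact (D : Fin d → Derivation k S S) (b : ℕ) (Bc : ℕ → S)
    {K : Type} [Field K] [Algebra k K] (φ : Polynomial S →ₐ[k] PowerSeries K) :
    Subalgebra (PowerSeries K) (Polynomial (PowerSeries K)) :=
  Algebra.adjoin (PowerSeries K)
    (insert
      (Polynomial.C ((PowerSeries.X : PowerSeries K) ^ tOrd (φ Polynomial.X)) * Polynomial.X)
      {p : Polynomial (PowerSeries K) | ∃ (g : S) (l : ℕ),
        (Polynomial.C g * Polynomial.X ^ l : Polynomial S) ∈ hypElim k d S D b Bc ∧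
        φ (Polynomial.C g) ≠ 0 ∧
        p = Polynomial.C (φ (Polynomial.C g)) * Polynomial.X ^ l})


/-- `t`-adic order as an extended nonnegative real (`∞` at zero). -/
def ordE {K : Type*} [Field K] (h : PowerSeries K) : ℝ≥0∞ := ((h.order : ℕ∞) : ℝ≥0∞)

theorem mem_tId_pow {K : Type*} [Field K] (h : PowerSeries K) (n : ℕ) :
    h ∈ tId K ^ n ↔ (n : ℕ∞) ≤ h.order := by
  rw [tId, Ideal.span_singleton_pow, Ideal.mem_span_singleton, PowerSeries.X_pow_dvd_iff]
  constructor
  · intro H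
    exact PowerSeries.nat_le_order _ _ H
  · intro H i hi
    exact PowerSeries.coeff_of_lt_order _ (lt_of_lt_of_le (by exact_mod_cast hi) H)

theorem tOrd_eq {K : Type*} [Field K] (h : PowerSeries K) (h0 : h ≠ 0) :
    ((tOrd h : ℕ) : ℕ∞) = h.order := by
  have hs : {n : ℕ | h ∈ tId K ^ n} = Set.Iic h.order.toNat := by
    ext n
    rw [Set.mem_ofPred_eq, mem_tId_pow, ← PowerSeries.coe_toNat_order h0]
    simp
  rw [tOrd, adicOrder, hs, csSup_Iic, PowerSeries.coe_toNat_order h0]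

theorem tOrd_eq_ordE {K : Type*} [Field K] (h : PowerSeries K) (h0 : h ≠ 0) :
    ((tOrd h : ℕ) : ℝ≥0∞) = ordE h := by
  rw [ordE, ← tOrd_eq h h0]; simp

theorem ordE_zero {K : Type*} [Field K] : ordE (0 : PowerSeries K) = ⊤ := by
  simp [ordE]

theorem ordE_add {K : Type*} [Field K] {g h : PowerSeries K} {c : ℝ≥0∞}
    (hg : c ≤ ordE g) (hh : c ≤ ordE h) : c ≤ ordE (g + h) := by
  refine (le_min hg hh).trans ?_
  rw [ordE, ordE, ordE, ← ENat.toENNReal_min, ENat.toENNReal_le]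
  exact PowerSeries.min_order_le_order_add _ _

theorem ordE_mul {K : Type*} [Field K] (g h : PowerSeries K) :
    ordE (g * h) = ordE g + ordE h := by
  rw [ordE, ordE, ordE, ← ENat.toENNReal_add, PowerSeries.order_mul]

theorem ordE_pow {K : Type*} [Field K] (g : PowerSeries K) (n : ℕ) :
    ordE (g ^ n) = n * ordE g := by
  induction n with
  | zero => simp [ordE]
  | succ n ih => rw [pow_succ, ordE_mul, ih]; push_cast; ring

theorem ordE_sum {K ι : Type*} [Field K] (s : Finset ι) (g : ι → PowerSeries K) {c : ℝ≥0∞}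
    (hg : ∀ i ∈ s, c ≤ ordE (g i)) : c ≤ ordE (∑ i ∈ s, g i) := by
  classical
  induction s using Finset.induction_on with
  | empty => simp [ordE_zero]
  | insert a s ha ih =>
    rw [Finset.sum_insert ha]
    exact ordE_add (hg a (by simp)) (ih fun i hi => hg i (by simp [hi]))

theorem mem_adicOrder {R : Type*} [CommRing R] (m : Ideal R) (f : R) :
    f ∈ m ^ adicOrder m f := by
  by_cases hb : BddAbove {n : ℕ | f ∈ m ^ n}
  · exact Nat.sSup_mem ⟨0, by simp⟩ hb
  · rw [adicOrder, Nat.sSup_of_not_bddAbove hb]; simp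

theorem mPoly_le (k : Type) [Field k] (d : ℕ) :
    mPoly k d ≤ Ideal.span (Set.range MvPolynomial.X) := by
  intro p hp
  rw [mPoly, RingHom.mem_ker] at hp
  have hp0 : MvPolynomial.constantCoeff p = 0 := by
    simpa [MvPolynomial.aeval_zero'] using hp
  rw [← Set.image_univ, MvPolynomial.mem_ideal_span_X_image]
  intro m hm
  by_contra hcon
  push Not at hcon
  have : m = 0 := by ext i; simpa using hcon i
  subst this
  rw [MvPolynomial.mem_support_iff] at hm
  exact hm (by simpa [MvPolynomial.constantCoeff_eq] using hp0)

/-- The graded bound is inherited by the generated subalgebra. -/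
theorem adjoin_bound {K : Type*} [Field K] (c : ℝ≥0∞) (s : Set (Polynomial (PowerSeries K)))
    (hs : ∀ p ∈ s, ∀ n : ℕ, n * c ≤ ordE (p.coeff n))
    (p : Polynomial (PowerSeries K)) (hp : p ∈ Algebra.adjoin (PowerSeries K) s) :
    ∀ n : ℕ, n * c ≤ ordE (p.coeff n) := by
  induction hp using Algebra.adjoin_induction with
  | mem x hx => exact hs x hx
  | algebraMap r =>
    intro n
    rw [Polynomial.algebraMap_apply, Polynomial.coeff_C]
    split_ifs with h
    · simp [h]
    · simp [ordE_zero]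
  | add x y _ _ hx hy =>
    intro n
    rw [Polynomial.coeff_add]
    exact ordE_add (hx n) (hy n)
  | mul x y _ _ hx hy =>
    intro n
    rw [Polynomial.coeff_mul]
    refine ordE_sum _ _ fun i hi => ?_
    rw [ordE_mul, ← Finset.HasAntidiagonal.mem_antidiagonal.mp hi]
    push_cast
    rw [add_mul]
    exact add_le_add (hx _) (hy _)

/-- (Theorem `thm:desigualdad`, hypersurface case.)  In the hypersurface setting, for every
field extension `K ⊇ k` and every arc `φ : S[x] → K⟦t⟧` in `X = V(f)` through the closed
point `ξ`, one has `r_{X,φ} / ord(φ) ≥ ord(G_X^{(d)})`. -/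
theorem hypersurface_normalized_contact_order_ge_elimination_order
    (k : Type) [Field k] [CharZero k] (d : ℕ) (hd : 1 ≤ d)
    (S : Type) [CommRing S] [IsDomain S] [Algebra (MvPolynomial (Fin d) k) S]
    [Algebra k S] [IsScalarTower k (MvPolynomial (Fin d) k) S] [IsSLoc k d S]
    (D : Fin d → Derivation k S S)
    (hD : ∀ i j : Fin d, D j (zvar k d S i) = if i = j then 1 else 0)
    (b : ℕ) (hb : 2 ≤ b) (Bc : ℕ → S)
    (hmem : ∀ i ≤ b - 2, Bc i ∈ (mS k d S) ^ (b - i))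
    (hnz : ∃ i ≤ b - 2, Bc i ≠ 0)
    (hirr : Irreducible (minPolyOf b Bc))
    (K : Type) [Field K] [Algebra k K]
    (φ : Polynomial S →ₐ[k] PowerSeries K) (hφ : IsHypArc k d S b Bc φ) :
    reesOrder (mS k d S) (hypElim k d S D b Bc) ≤
      reesOrder (tId K) (hypContact k d S D b Bc φ) / (hypArcOrd k d S φ : ℝ≥0∞) := by
  obtain ⟨hf, hx, hz, hx0, hz0⟩ := hφ
  set N := hypArcOrd k d S φ with hN
  set G := hypElim k d S D b Bc with hG
  set q := reesOrder (mS k d S) G with hq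
  -- positivity of the order of the arc
  have hNpos : N ≠ 0 := by
    have key : ∀ h : PowerSeries K, h ∈ tId K → h ≠ 0 → tOrd h ≠ 0 := by
      intro h h1 h2 h3
      have h4 := (mem_tId_pow h 1).1 (by simpa using h1)
      rw [← tOrd_eq h h2, h3] at h4
      simp at h4
    have hmem' := Nat.sInf_mem (s := insert (tOrd (φ Polynomial.X))
      (Set.range fun j => tOrd (φ (Polynomial.C (zvar k d S j))))) ⟨_, Set.mem_insert _ _⟩
    change N ∈ _ at hmem'
    rcases hmem' with h | ⟨j, h⟩
    · rw [h]; exact key _ hx hx0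
    · rw [← h]; exact key _ (hz j) (hz0 j)
  -- the arc maps `m` into `(t^N)`
  have hNz : ∀ j, N ≤ tOrd (φ (Polynomial.C (zvar k d S j))) := fun j =>
    Nat.sInf_le (Set.mem_insert_of_mem _ ⟨j, rfl⟩)
  let ψ : S →+* PowerSeries K := (φ : Polynomial S →+* PowerSeries K).comp Polynomial.C
  have hmap : (mS k d S).map ψ ≤ tId K ^ N := by
    refine (Ideal.map_mono (Ideal.map_mono (mPoly_le k d))).trans ?_
    rw [Ideal.map_map, Ideal.map_span, Ideal.span_le]
    rintro _ ⟨_, ⟨j, rfl⟩, rfl⟩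
    change φ (Polynomial.C (zvar k d S j)) ∈ tId K ^ N
    rw [mem_tId_pow, ← tOrd_eq _ (hz0 j)]
    exact_mod_cast hNz j
  have hpow : ∀ (g : S) (n : ℕ), g ∈ (mS k d S) ^ n →
      (n : ℝ≥0∞) * N ≤ ordE (φ (Polynomial.C g)) := by
    intro g n hg
    have h1 : ψ g ∈ tId K ^ (N * n) := by
      rw [pow_mul]
      refine Ideal.pow_right_mono hmap n ?_
      rw [← Ideal.map_pow]
      exact Ideal.mem_map_of_mem ψ hg
    rw [mem_tId_pow] at h1
    have h2 := ENat.toENNReal_le.2 h1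
    rw [ENat.toENNReal_coe] at h2
    push_cast at h2
    rw [mul_comm]
    exact h2
  -- homogeneous elements of the elimination algebra
  have hel : ∀ (g : S) (l : ℕ), (Polynomial.C g * Polynomial.X ^ l : Polynomial S) ∈ G →
      (l : ℝ≥0∞) * (q * N) ≤ ordE (φ (Polynomial.C g)) := by
    intro g l hg
    rcases Nat.eq_zero_or_pos l with rfl | hl
    · simp
    by_cases hg0 : g = 0
    · simp [hg0, ordE_zero]
    refine le_trans ?_ (hpow g _ (mem_adicOrder _ g))
    have h1 : q ≤ (adicOrder (mS k d S) g : ℝ≥0∞) / (l : ℝ≥0∞) :=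
      sInf_le ⟨g, l, hg0, hl, hg, rfl⟩
    rw [ENNReal.le_div_iff_mul_le (Or.inl (by exact_mod_cast hl.ne')) (Or.inl (by simp))] at h1
    rw [← mul_assoc, mul_comm (l : ℝ≥0∞) q]
    gcongr
  have hB : ∀ i ≤ b - 2, (Polynomial.C (Bc i) * Polynomial.X ^ (b - i) : Polynomial S) ∈ G := by
    intro i hi
    rw [hG, hypElim, diffClosure, Algebra.mem_sInf]
    rintro H ⟨hH, -⟩
    exact hH ⟨i, hi, rfl⟩
  -- the contact of `x`
  have hα : q * N ≤ (tOrd (φ Polynomial.X) : ℝ≥0∞) := by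
    by_contra hcon
    rw [not_le] at hcon
    set α := tOrd (φ Polynomial.X) with hα
    have hxo : ordE (φ Polynomial.X) = α := (tOrd_eq_ordE _ hx0).symm
    have hterm : ∀ j ∈ Finset.range (b - 1), ((b * α + 1 : ℕ) : ℝ≥0∞) ≤
        ordE (φ (Polynomial.C (Bc j) * Polynomial.X ^ j)) := by
      intro j hj
      rw [Finset.mem_range] at hj
      have h1 := hel _ _ (hB j (by omega))
      have h2 : ((b * α : ℕ) : ℝ≥0∞) < ordE (φ (Polynomial.C (Bc j) * Polynomial.X ^ j)) := by
        rw [map_mul, map_pow, ordE_mul, ordE_pow, hxo]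
        have h3 : ((b * α : ℕ) : ℝ≥0∞) = ((b - j : ℕ) : ℝ≥0∞) * α + j * α := by
          rw [← add_mul, ← Nat.cast_add, Nat.sub_add_cancel (by omega)]; push_cast; rfl
        rw [h3]
        refine ENNReal.add_lt_add_right (by finiteness) (lt_of_lt_of_le ?_ h1)
        exact ENNReal.mul_lt_mul_right (by exact_mod_cast (by omega : b - j ≠ 0)) (by simp) hcon
      rw [ordE, ← ENat.toENNReal_coe, ENat.toENNReal_lt] at h2
      rw [ordE, ← ENat.toENNReal_coe, ENat.toENNReal_le]
      push_cast at h2 ⊢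
      exact Order.add_one_le_of_lt h2
    have hsum := ordE_sum _ _ hterm
    rw [minPolyOf, map_add, map_sum, map_pow, add_eq_zero_iff_neg_eq] at hf
    have h5 : ordE (φ Polynomial.X ^ b) = ((b * α : ℕ) : ℝ≥0∞) := by
      rw [ordE_pow, hxo]; push_cast; rfl
    rw [← hf] at hsum
    have h6 : ordE (-φ Polynomial.X ^ b) = ordE (φ Polynomial.X ^ b) := by
      rw [ordE, ordE, PowerSeries.order_neg]
    rw [h6, h5, Nat.cast_le] at hsum
    omega
  rw [ENNReal.le_div_iff_mul_le (Or.inl (by exact_mod_cast hNpos)) (Or.inl (by simp))]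
  refine le_sInf ?_
  rintro _ ⟨h, n, h0, hn, hmemh, rfl⟩
  rw [ENNReal.le_div_iff_mul_le (Or.inl (by exact_mod_cast (by omega : n ≠ 0)))
    (Or.inl (by simp))]
  have hfin := adjoin_bound (q * N) _ ?_ _ hmemh n
  · change _ ≤ ((tOrd h : ℕ) : ℝ≥0∞)
    rw [tOrd_eq_ordE h h0, mul_comm]
    simpa using hfin
  · rintro p (rfl | ⟨g, l, hg, -, rfl⟩) n
    · rw [Polynomial.coeff_C_mul, Polynomial.coeff_X]
      split_ifs with h1
      · subst h1
        rw [mul_one, ordE_pow]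
        simpa [ordE] using hα
      · simp [ordE_zero]
    · rw [Polynomial.coeff_C_mul, Polynomial.coeff_X_pow]
      split_ifs with h1
      · subst h1
        rw [mul_one]
        exact hel _ _ hg
      · simp [ordE_zero]

end NashMult
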